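/- (Barabanov's Theorem, sufficiency direction.) If the family 𝒜 = (A_0, …, A_{m−1}) is irreducible and there exist ρ ≥ 0 and a norm ν on ℝ^d satisfying ρ·ν(x) = max_{0≤i≤m−1} ν(A_i x) for all x ∈ ℝ^d, then ρ equals the joint spectral radius ρ(𝒜). -/

import Mathlib

/-!
Iterating the identity `ρ·ν(x) = max_i ν(A_i x)` gives, for every `n`, the bound
`ν(A_σ x) ≤ ρ^n ν(x)` for all words `σ` of length `n`, and, by choosing greedily a maximizing
letter at each step, a word attaining equality at any prescribed `x`.  Since the norms `N` and `ν`
on `ℝ^d` are equivalent, there is `K > 0` with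
`K⁻¹ ρ^n ≤ max_σ ‖A_σ‖_N ≤ K ρ^n`.  Taking `n`-th roots, `ρ_n(𝒜)` lies between `K^{-1/n} ρ` and
`K^{1/n} ρ`, so it converges to `ρ`; in particular its limsup is `ρ`.
-/

open Filter Topology

/-- `N` is a norm on `ℝ^d`. -/
structure IsNorm (d : ℕ) (N : (Fin d → ℝ) → ℝ) : Prop where
  eq_zero_iff : ∀ x, N x = 0 ↔ x = 0
  add_le : ∀ x y, N (x + y) ≤ N x + N y
  smul_eq : ∀ (a : ℝ) (x), N (a • x) = |a| * N x

/-- The operator norm of the matrix `B` induced by the norm `N` on `ℝ^d`. -/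
noncomputable def opNorm {d : ℕ} (N : (Fin d → ℝ) → ℝ)
    (B : Matrix (Fin d) (Fin d) ℝ) : ℝ :=
  ⨆ x : {x : Fin d → ℝ // x ≠ 0}, N (B.mulVec x.1) / N x.1

/-- The product `A_{σ_{n-1}} ⋯ A_{σ_1} A_{σ_0}`. -/
noncomputable def word {d m : ℕ} (A : Fin m → Matrix (Fin d) (Fin d) ℝ)
    (n : ℕ) (σ : Fin n → Fin m) : Matrix (Fin d) (Fin d) ℝ :=
  (List.ofFn fun i => A (σ i)).reverse.prod

/-- `ρ_n(𝒜) = max_σ ‖A_σ‖^{1/n}` with respect to the norm `N`. -/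
noncomputable def rhoN {d m : ℕ} (N : (Fin d → ℝ) → ℝ)
    (A : Fin m → Matrix (Fin d) (Fin d) ℝ) (n : ℕ) : ℝ :=
  ⨆ σ : Fin n → Fin m, opNorm N (word A n σ) ^ ((n : ℝ)⁻¹)

/-- The joint spectral radius `ρ(𝒜) = limsup_{n→∞} ρ_n(𝒜)`. -/
noncomputable def jsr {d m : ℕ} (N : (Fin d → ℝ) → ℝ)
    (A : Fin m → Matrix (Fin d) (Fin d) ℝ) : ℝ :=
  Filter.limsup (rhoN N A) Filter.atTop

/-- The spectral radius of a real square matrix: the maximum modulus of its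
complex eigenvalues. -/
noncomputable def specRad {d : ℕ} (B : Matrix (Fin d) (Fin d) ℝ) : ℝ :=
  sSup ((fun μ => ‖μ‖) '' spectrum ℂ (B.map (fun t => (t : ℂ))))

/-- The family `𝒜` is irreducible: the only invariant subspaces are `{0}` and `ℝ^d`. -/
def FamIrreducible {d m : ℕ} (A : Fin m → Matrix (Fin d) (Fin d) ℝ) : Prop :=
  ∀ V : Submodule ℝ (Fin d → ℝ),
    (∀ i : Fin m, ∀ x ∈ V, (A i).mulVec x ∈ V) → V = ⊥ ∨ V = ⊤

/-- `ν` is a Barabanov norm for the family `𝒜` with constant `ρ`: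
`ρ·ν(x) = max_i ν(A_i x)` for all `x`. -/
def IsBarabanovNorm {d m : ℕ} (A : Fin m → Matrix (Fin d) (Fin d) ℝ)
    (ν : (Fin d → ℝ) → ℝ) (ρ : ℝ) : Prop :=
  IsNorm d ν ∧ 0 ≤ ρ ∧ ∀ x, ρ * ν x = ⨆ i : Fin m, ν ((A i).mulVec x)

lemma IsNorm.nonneg {d : ℕ} {N : (Fin d → ℝ) → ℝ} (h : IsNorm d N) (x : Fin d → ℝ) :
    0 ≤ N x := by
  have h1 := h.add_le x ((-1 : ℝ) • x)
  have h2 : x + (-1 : ℝ) • x = 0 := by simp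
  rw [h2, (h.eq_zero_iff 0).2 rfl, h.smul_eq] at h1
  norm_num at h1
  exact h1

lemma IsNorm.pos {d : ℕ} {N : (Fin d → ℝ) → ℝ} (h : IsNorm d N) {x : Fin d → ℝ}
    (hx : x ≠ 0) : 0 < N x :=
  lt_of_le_of_ne (h.nonneg x) fun h0 => hx ((h.eq_zero_iff x).1 h0.symm)

/-- A convex function on a finite-dimensional space is continuous. -/
lemma IsNorm.continuous {d : ℕ} {N : (Fin d → ℝ) → ℝ} (h : IsNorm d N) : Continuous N := by
  have hc : ConvexOn ℝ Set.univ N := by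
    refine ⟨convex_univ, fun x _ y _ a b ha hb _ => ?_⟩
    refine (h.add_le _ _).trans_eq ?_
    rw [h.smul_eq, h.smul_eq, abs_of_nonneg ha, abs_of_nonneg hb]
    rfl
  rw [← continuousOn_univ]
  exact hc.continuousOn isOpen_univ

lemma IsNorm.equiv_sup {d : ℕ} (hd : 1 ≤ d) {N : (Fin d → ℝ) → ℝ} (h : IsNorm d N) :
    ∃ c C : ℝ, 0 < c ∧ 0 < C ∧ ∀ x, c * ‖x‖ ≤ N x ∧ N x ≤ C * ‖x‖ := by
  have : Nonempty (Fin d) := ⟨⟨0, hd⟩⟩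
  have hs : IsCompact (Metric.sphere (0 : Fin d → ℝ) 1) := isCompact_sphere _ _
  have hne : (Metric.sphere (0 : Fin d → ℝ) 1).Nonempty :=
    NormedSpace.sphere_nonempty.2 zero_le_one
  obtain ⟨u, hu, hmin⟩ := hs.exists_isMinOn hne h.continuous.continuousOn
  obtain ⟨v, hv, hmax⟩ := hs.exists_isMaxOn hne h.continuous.continuousOn
  have hu0 : u ≠ 0 := ne_zero_of_mem_unit_sphere ⟨u, hu⟩
  have hv0 : v ≠ 0 := ne_zero_of_mem_unit_sphere ⟨v, hv⟩
  refine ⟨N u, N v, h.pos hu0, h.pos hv0, fun x => ?_⟩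
  by_cases hx : x = 0
  · subst hx
    simp [(h.eq_zero_iff 0).2 rfl]
  have hn : 0 < ‖x‖ := norm_pos_iff.2 hx
  have hmem : ‖x‖⁻¹ • x ∈ Metric.sphere (0 : Fin d → ℝ) 1 := by
    simp [norm_smul, hn.ne']
  have e : N x = N (‖x‖⁻¹ • x) * ‖x‖ := by
    rw [h.smul_eq, abs_of_pos (inv_pos.2 hn)]
    field_simp
  rw [e]
  exact ⟨mul_le_mul_of_nonneg_right (hmin hmem) hn.le,
    mul_le_mul_of_nonneg_right (hmax hmem) hn.le⟩

lemma word_succ {d m : ℕ} (A : Fin m → Matrix (Fin d) (Fin d) ℝ) (n : ℕ)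
    (σ : Fin (n + 1) → Fin m) :
    word A (n + 1) σ = A (σ (Fin.last n)) * word A n (fun i => σ i.castSucc) := by
  rw [word, List.ofFn_succ']
  simp [word, -List.ofFn_succ]

section Barabanov

variable {d m : ℕ} {A : Fin m → Matrix (Fin d) (Fin d) ℝ} {ρ : ℝ} {ν : (Fin d → ℝ) → ℝ}

lemma nu_word_le (hρ : 0 ≤ ρ)
    (hbar : ∀ x, ρ * ν x = ⨆ i : Fin m, ν ((A i).mulVec x)) (n : ℕ) (σ : Fin n → Fin m)
    (x : Fin d → ℝ) : ν ((word A n σ).mulVec x) ≤ ρ ^ n * ν x := by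
  induction n with
  | zero => simp [word]
  | succ n ih =>
    rw [word_succ, ← Matrix.mulVec_mulVec]
    set y := (word A n fun i => σ i.castSucc).mulVec x with hy
    calc ν ((A (σ (Fin.last n))).mulVec y)
        ≤ ⨆ i : Fin m, ν ((A i).mulVec y) :=
          le_ciSup (f := fun i => ν ((A i).mulVec y)) (Set.finite_range _).bddAbove _
      _ = ρ * ν y := (hbar y).symm
      _ ≤ ρ * (ρ ^ n * ν x) := mul_le_mul_of_nonneg_left (ih _) hρ
      _ = ρ ^ (n + 1) * ν x := by ring

lemma exists_nu_word_eq (hm : 1 ≤ m)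
    (hbar : ∀ x, ρ * ν x = ⨆ i : Fin m, ν ((A i).mulVec x)) (n : ℕ)
    (x : Fin d → ℝ) : ∃ σ : Fin n → Fin m, ν ((word A n σ).mulVec x) = ρ ^ n * ν x := by
  have : Nonempty (Fin m) := ⟨⟨0, hm⟩⟩
  induction n with
  | zero => exact ⟨Fin.elim0, by simp [word]⟩
  | succ n ih =>
    obtain ⟨σ, hσ⟩ := ih
    obtain ⟨i, hi⟩ := exists_eq_ciSup_of_finite
      (f := fun i => ν ((A i).mulVec ((word A n σ).mulVec x)))
    refine ⟨Fin.snoc σ i, ?_⟩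
    rw [word_succ, ← Matrix.mulVec_mulVec]
    simp only [Fin.snoc_last, Fin.snoc_castSucc]
    rw [hi, ← hbar, hσ]
    ring

end Barabanov

/-- Barabanov's theorem, sufficiency: if `𝒜` is irreducible and `ν` is a norm with
`ρ·ν(x) = max_i ν(A_i x)` for all `x`, then `ρ` is the joint spectral radius
(computed with respect to any norm). -/
theorem stmt6 (d m : ℕ) (hd : 1 ≤ d) (hm : 1 ≤ m)
    (A : Fin m → Matrix (Fin d) (Fin d) ℝ) (hirr : FamIrreducible A)
    (ρ : ℝ) (hρ : 0 ≤ ρ) (ν : (Fin d → ℝ) → ℝ) (hν : IsNorm d ν)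
    (hbar : ∀ x, ρ * ν x = ⨆ i : Fin m, ν ((A i).mulVec x)) :
    ∀ N : (Fin d → ℝ) → ℝ, IsNorm d N → ρ = jsr N A := by
  intro N hN
  have : Nonempty (Fin d) := ⟨⟨0, hd⟩⟩
  have : Nonempty (Fin m) := ⟨⟨0, hm⟩⟩
  obtain ⟨c, C, hc, hC, hcC⟩ := hN.equiv_sup hd
  obtain ⟨c', C', hc', hC', hcC'⟩ := hν.equiv_sup hd
  -- `N ≤ a ν` and `ν ≤ b N`, so the constant `K` of the equivalence can be taken to be `a b`.
  obtain ⟨a, b, ha, hb, hNν, hνN⟩ : ∃ a b : ℝ, 0 < a ∧ 0 < b ∧ (∀ x, N x ≤ a * ν x) ∧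
      ∀ x, ν x ≤ b * N x := by
    refine ⟨C / c', C' / c, by positivity, by positivity, fun x => ?_, fun x => ?_⟩
    · rw [div_mul_eq_mul_div, le_div_iff₀ hc']
      nlinarith [mul_le_mul_of_nonneg_left (hcC' x).1 hC.le,
        mul_le_mul_of_nonneg_right (hcC x).2 hc'.le]
    · rw [div_mul_eq_mul_div, le_div_iff₀ hc]
      nlinarith [mul_le_mul_of_nonneg_left (hcC x).1 hC'.le,
        mul_le_mul_of_nonneg_right (hcC' x).2 hc.le]
  have hK : 0 < a * b := mul_pos ha hb
  have hquot : ∀ n (σ : Fin n → Fin m) (x : {x : Fin d → ℝ // x ≠ 0}),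
      N ((word A n σ).mulVec x.1) / N x.1 ≤ a * b * ρ ^ n := by
    intro n σ x
    rw [div_le_iff₀ (hN.pos x.2)]
    calc N ((word A n σ).mulVec x.1) ≤ a * ν ((word A n σ).mulVec x.1) := hNν _
      _ ≤ a * (ρ ^ n * (b * N x.1)) := by
        have := (nu_word_le hρ hbar n σ x.1).trans
          (mul_le_mul_of_nonneg_left (hνN x.1) (pow_nonneg hρ n))
        exact mul_le_mul_of_nonneg_left this ha.le
      _ = a * b * ρ ^ n * N x.1 := by ring
  have hop_le : ∀ n (σ : Fin n → Fin m), opNorm N (word A n σ) ≤ a * b * ρ ^ n :=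
    fun n σ => Real.iSup_le (hquot n σ) (by positivity)
  have hop_nonneg : ∀ n (σ : Fin n → Fin m), 0 ≤ opNorm N (word A n σ) :=
    fun n σ => Real.iSup_nonneg fun x => div_nonneg (hN.nonneg _) (hN.nonneg _)
  have hop_ge : ∀ n, ∃ σ : Fin n → Fin m, (a * b)⁻¹ * ρ ^ n ≤ opNorm N (word A n σ) := by
    intro n
    obtain ⟨x, hx⟩ := exists_ne (0 : Fin d → ℝ)
    obtain ⟨σ, hσ⟩ := exists_nu_word_eq hm hbar n x
    refine ⟨σ, le_trans ?_ (le_ciSup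
      (f := fun x : {x : Fin d → ℝ // x ≠ 0} => N ((word A n σ).mulVec x.1) / N x.1)
      ⟨a * b * ρ ^ n, Set.forall_mem_range.2 (hquot n σ)⟩ ⟨x, hx⟩)⟩
    rw [le_div_iff₀ (hN.pos hx), mul_assoc, inv_mul_le_iff₀ hK]
    calc ρ ^ n * N x ≤ ρ ^ n * (a * ν x) :=
          mul_le_mul_of_nonneg_left (hNν x) (pow_nonneg hρ n)
      _ = a * ν ((word A n σ).mulVec x) := by rw [hσ]; ring
      _ ≤ a * (b * N ((word A n σ).mulVec x)) := mul_le_mul_of_nonneg_left (hνN _) ha.le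
      _ = a * b * N ((word A n σ).mulVec x) := by ring
  have hroot : ∀ k : ℝ, 0 < k → ∀ n : ℕ, 1 ≤ n →
      (k * ρ ^ n) ^ ((n : ℝ)⁻¹) = k ^ ((n : ℝ)⁻¹) * ρ := by
    intro k hk n hn
    rw [Real.mul_rpow hk.le (pow_nonneg hρ n), Real.pow_rpow_inv_natCast hρ (by omega)]
  have hlim : ∀ k : ℝ, 0 < k →
      Tendsto (fun n : ℕ => k ^ ((n : ℝ)⁻¹) * ρ) atTop (𝓝 ρ) := by
    intro k hk
    have h1 : Tendsto (fun n : ℕ => k ^ ((n : ℝ)⁻¹)) atTop (𝓝 (k ^ (0 : ℝ))) :=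
      (Real.continuousAt_const_rpow hk.ne').tendsto.comp tendsto_inv_atTop_nhds_zero_nat
    simpa using h1.mul_const ρ
  have hT : Tendsto (rhoN N A) atTop (𝓝 ρ) := by
    refine tendsto_of_tendsto_of_tendsto_of_le_of_le' (hlim (a * b)⁻¹ (inv_pos.2 hK))
      (hlim (a * b) hK) ?_ ?_
    · filter_upwards [eventually_ge_atTop 1] with n hn
      obtain ⟨σ, hσ⟩ := hop_ge n
      rw [← hroot _ (inv_pos.2 hK) n hn]
      exact (Real.rpow_le_rpow (by positivity) hσ (by positivity)).trans
        (le_ciSup (f := fun σ : Fin n → Fin m => opNorm N (word A n σ) ^ ((n : ℝ)⁻¹))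
          (Set.finite_range _).bddAbove σ)
    · filter_upwards [eventually_ge_atTop 1] with n hn
      rw [← hroot _ hK n hn]
      exact ciSup_le fun σ => Real.rpow_le_rpow (hop_nonneg n σ) (hop_le n σ) (by positivity)
  exact hT.limsup_eq.symm
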